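/- (Kac's central limit theorem) For a positive integer N and real u, let B_N(u) = Σ_{n=1}^N cos(u·log p_n), where p_n is the n-th prime. Then for all real numbers x_1 < x_2, lim_{N→∞} lim_{T→∞} (1/T)·Leb{ u ∈ [T, 2T] : x_1/√2 < B_N(u)/√N < x_2/√2 } = (1/√(2π)) ∫_{x_1}^{x_2} e^{-x²/2} dx, where Leb denotes Lebesgue measure (so that (1/T)·Leb on [T,2T] is the uniform probability measure) and the inner limit over T exists for each fixed N. -/

import Mathlib

open MeasureTheory Filter Real

/-- The volume on the unit circle is a probability measure. -/
instance kacCircleProb : IsProbabilityMeasure (volume : Measure UnitAddCircle) := by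
  constructor
  simp

/-- The cosine on the unit circle. -/
noncomputable def kacCos (z : UnitAddCircle) : ℝ := (fourier 1 z).re

lemma kacCos_continuous : Continuous kacCos :=
  Complex.continuous_re.comp (fourier 1).continuous

lemma kacCos_coe (x : ℝ) : kacCos (x : UnitAddCircle) = Real.cos (2 * π * x) := by
  unfold kacCos
  rw [fourier_coe_apply]
  have : (2 * π * Complex.I * (1 : ℤ) * x / (1 : ℝ) : ℂ) = ((2 * π * x : ℝ) : ℂ) * Complex.I := by
    push_cast; ring
  rw [this, Complex.exp_ofReal_mul_I_re]

lemma kac_level_circle (c : ℝ) : volume {z : UnitAddCircle | kacCos z = c} = 0 := by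
  have hpt : ∀ z : UnitAddCircle, volume ({z} : Set UnitAddCircle) = 0 := by
    intro z
    have := AddCircle.volume_closedBall (T := 1) (x := z) 0
    simpa using this
  by_cases h : ∃ z0, kacCos z0 = c
  · obtain ⟨z0, rfl⟩ := h
    refine measure_mono_null (t := {z0} ∪ {-z0}) ?_ (measure_union_null (hpt _) (hpt _))
    intro z hz
    simp only [Set.mem_ofPred_eq] at hz
    induction z0 using QuotientAddGroup.induction_on with | H a =>
    induction z using QuotientAddGroup.induction_on with | H b =>
    change kacCos ((b : ℝ) : UnitAddCircle) = kacCos ((a : ℝ) : UnitAddCircle) at hz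
    rw [kacCos_coe, kacCos_coe, eq_comm, Real.cos_eq_cos_iff] at hz
    obtain ⟨k, hk | hk⟩ := hz
    · left
      have : b = a + k • (1 : ℝ) := by
        have := Real.pi_pos
        apply mul_left_cancel₀ (show (2 * π) ≠ 0 by positivity)
        rw [hk]; simp; ring
      rw [Set.mem_singleton_iff, this]
      change ((a + k • (1 : ℝ) : ℝ) : UnitAddCircle) = ((a : ℝ) : UnitAddCircle)
      simp only [AddCircle.coe_add, AddCircle.coe_zsmul, AddCircle.coe_period, smul_zero, add_zero]
    · right
      have : b = -a + k • (1 : ℝ) := by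
        have := Real.pi_pos
        apply mul_left_cancel₀ (show (2 * π) ≠ 0 by positivity)
        rw [hk]; simp; ring
      rw [Set.mem_singleton_iff, this]
      change ((-a + k • (1 : ℝ) : ℝ) : UnitAddCircle) = ((-a : ℝ) : UnitAddCircle)
      simp only [AddCircle.coe_add, AddCircle.coe_zsmul, AddCircle.coe_period, smul_zero, add_zero]
  · have : {z : UnitAddCircle | kacCos z = c} = ∅ := by
      ext z; simp; exact fun hz => h ⟨z, hz⟩
    simp [this]

lemma kac_level (n : ℕ) (c : ℝ) :
    volume {z : UnitAddTorus (Fin (n + 1)) | ∑ i, kacCos (z i) = c} = 0 := by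
  have hmp := (volume_preserving_piFinSuccAbove (fun _ : Fin (n + 1) => UnitAddCircle) 0).symm
  have hcl : MeasurableSet {z : Fin (n + 1) → UnitAddCircle | ∑ i, kacCos (z i) = c} := by
    have hc := kacCos_continuous
    exact (isClosed_eq (by fun_prop) continuous_const).measurableSet
  change volume {z : Fin (n + 1) → UnitAddCircle | ∑ i, kacCos (z i) = c} = 0
  rw [← hmp.measure_preimage hcl.nullMeasurableSet]
  rw [Measure.volume_eq_prod, Measure.prod_apply_symm (hmp.measurable hcl)]
  rw [lintegral_eq_zero_iff' ?_]
  · refine Filter.Eventually.of_forall fun y => ?_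
    have : ((fun x => (x, y)) ⁻¹' ((MeasurableEquiv.piFinSuccAbove (fun _ : Fin (n + 1) => UnitAddCircle) 0).symm ⁻¹' {z : Fin (n + 1) → UnitAddCircle | ∑ i, kacCos (z i) = c}))
      = {x | kacCos x = c - ∑ i, kacCos (y i)} := by
      ext x
      simp [MeasurableEquiv.piFinSuccAbove, Fin.sum_univ_succ, Fin.insertNthEquiv, eq_sub_iff_add_eq]
    simp only [this, Pi.zero_apply]
    exact kac_level_circle _
  · exact (measurable_measure_prodMk_right (hmp.measurable hcl)).aemeasurable

lemma kac_indep (N : ℕ) (m : Fin N → ℤ)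
    (h : ∑ i, (m i : ℝ) * Real.log (Nat.nth Nat.Prime i) = 0) : m = 0 := by
  have hp : ∀ i : ℕ, (Nat.nth Nat.Prime i).Prime := fun i => Nat.prime_nth_prime i
  have h1 : ∏ i : Fin N, ((Nat.nth Nat.Prime i : ℕ) : ℚ) ^ (m i) = 1 := by
    have : ∏ i : Fin N, ((Nat.nth Nat.Prime i : ℕ) : ℝ) ^ (m i) = 1 := by
      rw [← Real.exp_zero, ← h, Real.exp_sum]
      refine Finset.prod_congr rfl fun i _ => ?_
      rw [mul_comm, ← Real.rpow_def_of_pos (by exact_mod_cast (hp i).pos), Real.rpow_intCast]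
    apply Rat.cast_injective (α := ℝ)
    push_cast
    exact this
  funext j
  have : Fact (Nat.nth Nat.Prime j).Prime := ⟨hp j⟩
  have hval : ∀ s : Finset (Fin N), padicValRat (Nat.nth Nat.Prime j)
      (∏ i ∈ s, ((Nat.nth Nat.Prime i : ℕ) : ℚ) ^ (m i))
      = ∑ i ∈ s, (m i) * (if i = j then 1 else 0) := by
    intro s
    induction s using Finset.induction_on with
    | empty => simp
    | insert a s ha ih =>
      have hne : ∀ i : Fin N, ((Nat.nth Nat.Prime i : ℕ) : ℚ) ^ (m i) ≠ 0 := fun i =>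
        zpow_ne_zero _ (by exact_mod_cast (hp i).ne_zero)
      rw [Finset.prod_insert ha, Finset.sum_insert ha, padicValRat.mul (hne a)
        (Finset.prod_ne_zero_iff.2 fun i _ => hne i), ih, padicValRat.zpow]
      congr 2
      split_ifs with haj
      · subst haj
        simp [padicValRat.of_nat]
      · rw [padicValRat.of_nat]
        have : Fact (Nat.nth Nat.Prime a).Prime := ⟨hp a⟩
        rw [padicValNat_primes]
        · simp
        · intro heq
          exact haj (Fin.ext (Nat.nth_injective Nat.infinite_setOfPred_prime heq).symm)
  have := hval Finset.univ
  rw [h1] at this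
  simpa using this.symm

/-- The linear flow on the torus. -/
noncomputable def kacFlow (N : ℕ) (u : ℝ) : UnitAddTorus (Fin N) :=
  fun i => ((u * Real.log (Nat.nth Nat.Prime i) / (2 * π) : ℝ) : UnitAddCircle)

lemma kacFlow_continuous (N : ℕ) : Continuous (kacFlow N) := by
  refine continuous_pi fun i => ?_
  exact (AddCircle.continuous_mk' 1).comp (by fun_prop)

lemma kacFlow_cos (N : ℕ) (u : ℝ) : ∑ i, kacCos (kacFlow N u i) =
    ∑ n ∈ Finset.range N, Real.cos (u * Real.log (Nat.nth Nat.Prime n)) := by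
  rw [Finset.sum_range]
  refine Finset.sum_congr rfl fun i _ => ?_
  rw [kacFlow, kacCos_coe]
  congr 1
  field_simp

lemma kacFlow_mFourier (N : ℕ) (m : Fin N → ℤ) (u : ℝ) :
    UnitAddTorus.mFourier m (kacFlow N u) = Complex.exp
      (((∑ i, (m i : ℝ) * Real.log (Nat.nth Nat.Prime i) : ℝ) : ℂ) * u * Complex.I) := by
  simp only [UnitAddTorus.mFourier, ContinuousMap.coe_mk, kacFlow]
  simp_rw [fourier_coe_apply]
  rw [← Complex.exp_sum]
  congr 1
  push_cast
  rw [Finset.sum_mul, Finset.sum_mul]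
  refine Finset.sum_congr rfl fun i _ => ?_
  have : (π : ℂ) ≠ 0 := by exact_mod_cast Real.pi_ne_zero
  field_simp

lemma kac_integral_fourier (m : ℤ) (hm : m ≠ 0) : ∫ z : UnitAddCircle, fourier m z = 0 := by
  rw [← UnitAddCircle.intervalIntegral_preimage 0]
  simp_rw [fourier_coe_apply]
  have hc : (2 * π * Complex.I * m : ℂ) ≠ 0 := by
    have : (m : ℂ) ≠ 0 := by exact_mod_cast hm
    simp [Real.pi_ne_zero, this]
  have := integral_exp_mul_complex (a := 0) (b := 0 + 1) hc
  simp only [Complex.ofReal_one, div_one]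
  rw [this]
  have h2 : Complex.exp (2 * π * Complex.I * m) = 1 := by
    rw [mul_comm]; exact Complex.exp_int_mul_two_pi_mul_I m
  simp [h2]

lemma kac_integral_mFourier (N : ℕ) (m : Fin N → ℤ) (hm : m ≠ 0) :
    ∫ z : UnitAddTorus (Fin N), UnitAddTorus.mFourier m z = 0 := by
  simp only [UnitAddTorus.mFourier, ContinuousMap.coe_mk]
  refine (integral_fintype_prod_volume_eq_prod
    (fun i => fun z : UnitAddCircle => (fourier (m i) z : ℂ))).trans ?_
  obtain ⟨i, hi⟩ := Function.ne_iff.mp hm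
  exact Finset.prod_eq_zero (Finset.mem_univ i) (kac_integral_fourier _ hi)

/-- Uniform measure on `[0,1]`. -/
noncomputable def kacUnif : Measure ℝ := volume.restrict (Set.Icc 0 1)

instance kacUnifProb : IsProbabilityMeasure kacUnif := by
  constructor
  simp [kacUnif]

lemma kac_average_exp (l : ℝ) (hl : l ≠ 0) :
    Tendsto (fun T : ℝ => ∫ s, Complex.exp ((l : ℂ) * ((T * (1 + s) : ℝ) : ℂ) * Complex.I) ∂kacUnif)
      atTop (nhds 0) := by
  have hb : Tendsto (fun T : ℝ => 2 * |l|⁻¹ * T⁻¹) atTop (nhds 0) := by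
    simpa using (tendsto_inv_atTop_zero (𝕜 := ℝ)).const_mul (2 * |l|⁻¹)
  refine squeeze_zero_norm' ?_ hb
  filter_upwards [eventually_gt_atTop 0] with T hT
  have hc : (l * T * Complex.I : ℂ) ≠ 0 := by
    simp [hl, hT.ne']
  have h1 : ∀ s : ℝ, Complex.exp ((l : ℂ) * ((T * (1 + s) : ℝ) : ℂ) * Complex.I)
      = Complex.exp (l * T * Complex.I) * Complex.exp (l * T * Complex.I * s) := by
    intro s
    rw [← Complex.exp_add]; congr 1; push_cast; ring
  simp_rw [h1]
  rw [integral_const_mul, kacUnif, integral_Icc_eq_integral_Ioc,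
    ← intervalIntegral.integral_of_le zero_le_one, integral_exp_mul_complex hc]
  have e1 : ‖Complex.exp (l * T * Complex.I)‖ = 1 := by
    have := Complex.norm_exp_ofReal_mul_I (l * T)
    push_cast at this; exact this
  rw [norm_mul, e1, norm_div]
  have e2 : ‖(l * T * Complex.I : ℂ)‖ = |l| * T := by
    simp [abs_of_pos hT]
  rw [e2]
  have e3 : ‖Complex.exp (l * T * Complex.I * (1 : ℝ)) - Complex.exp (l * T * Complex.I * (0 : ℝ))‖ ≤ 2 := by
    refine (norm_sub_le _ _).trans ?_
    simp [e1]; norm_num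
  rw [one_mul, div_eq_mul_inv, mul_inv, mul_assoc 2]
  exact mul_le_mul_of_nonneg_right e3 (by positivity)

/-- The law of the flow at a random time. -/
noncomputable def kacLaw (N : ℕ) (T : ℝ) : ProbabilityMeasure (UnitAddTorus (Fin N)) :=
  ⟨kacUnif.map (fun s => kacFlow N (T * (1 + s))),
    Measure.isProbabilityMeasure_map
      ((kacFlow_continuous N).comp (by fun_prop)).measurable.aemeasurable⟩

/-- The Haar measure on the torus. -/
noncomputable def kacHaar (N : ℕ) : ProbabilityMeasure (UnitAddTorus (Fin N)) :=
  ⟨(volume : Measure (Fin N → UnitAddCircle)), inferInstance⟩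

lemma kac_span (N : ℕ) (f : C(UnitAddTorus (Fin N), ℂ))
    (hf : f ∈ Submodule.span ℂ (Set.range (UnitAddTorus.mFourier (d := Fin N)))) :
    Tendsto (fun T => ∫ z, f z ∂(kacLaw N T : Measure (UnitAddTorus (Fin N)))) atTop
      (nhds (∫ z, f z ∂(kacHaar N : Measure (UnitAddTorus (Fin N))))) := by
  have hInt : ∀ (g : C(UnitAddTorus (Fin N), ℂ)) (μ : ProbabilityMeasure (UnitAddTorus (Fin N))),
      Integrable (fun z => g z) (μ : Measure (UnitAddTorus (Fin N))) := fun g μ =>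
    g.continuous.integrable_of_hasCompactSupport (HasCompactSupport.of_compactSpace _)
  induction hf using Submodule.span_induction with
  | mem f hf =>
    obtain ⟨m, rfl⟩ := hf
    by_cases hm : m = 0
    · subst hm
      simp [UnitAddTorus.mFourier_zero]
    · have e1 : ∫ z, UnitAddTorus.mFourier m z ∂(kacHaar N : Measure (UnitAddTorus (Fin N))) = 0 :=
        kac_integral_mFourier N m hm
      rw [e1]
      have hl := mt (kac_indep N m) hm
      refine (kac_average_exp _ hl).congr fun T => ?_
      have : (kacLaw N T : Measure (UnitAddTorus (Fin N)))
        = kacUnif.map (fun s => kacFlow N (T * (1 + s))) := rfl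
      rw [this, integral_map]
      · simp_rw [kacFlow_mFourier]
      · exact ((kacFlow_continuous N).comp (by fun_prop)).measurable.aemeasurable
      · exact (UnitAddTorus.mFourier m).continuous.aestronglyMeasurable
  | zero => simp
  | add f g _ _ hf hg =>
    simp only [ContinuousMap.add_apply]
    simp_rw [fun μ : ProbabilityMeasure (UnitAddTorus (Fin N)) => integral_add (hInt f μ) (hInt g μ)]
    exact hf.add hg
  | smul a f _ hf =>
    simp only [ContinuousMap.smul_apply, integral_smul]
    exact hf.const_smul a

lemma kac_equidist (N : ℕ) : Tendsto (kacLaw N) atTop (nhds (kacHaar N)) := by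
  have hInt : ∀ (g : C(UnitAddTorus (Fin N), ℂ)) (μ : ProbabilityMeasure (UnitAddTorus (Fin N))),
      Integrable (fun z => g z) (μ : Measure (UnitAddTorus (Fin N))) := fun g μ =>
    g.continuous.integrable_of_hasCompactSupport (HasCompactSupport.of_compactSpace _)
  rw [ProbabilityMeasure.tendsto_iff_forall_integral_rclike_tendsto ℂ]
  intro f
  have hf : f.toContinuousMap ∈ closure
      (Submodule.span ℂ (Set.range (UnitAddTorus.mFourier (d := Fin N))) : Set _) := by
    rw [← Submodule.topologicalClosure_coe, UnitAddTorus.span_mFourier_closure_eq_top]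
    trivial
  rw [Metric.tendsto_nhds]
  intro ε hε
  obtain ⟨g, hg, hfg⟩ := Metric.mem_closure_iff.1 hf (ε / 3) (by positivity)
  have hclose : ∀ μ : ProbabilityMeasure (UnitAddTorus (Fin N)),
      dist (∫ z, f z ∂(μ : Measure (UnitAddTorus (Fin N))))
        (∫ z, g z ∂(μ : Measure (UnitAddTorus (Fin N)))) ≤ ε / 3 := by
    intro μ
    have hfi : Integrable (fun z => f z) (μ : Measure (UnitAddTorus (Fin N))) :=
      hInt f.toContinuousMap μ
    rw [dist_eq_norm, ← integral_sub hfi (hInt g μ)]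
    have := norm_integral_le_of_norm_le_const (μ := (μ : Measure (UnitAddTorus (Fin N))))
      (f := fun z => f z - g z) (C := ε / 3) (Eventually.of_forall fun z => by
        rw [← dist_eq_norm]
        exact (ContinuousMap.dist_apply_le_dist (f := f.toContinuousMap) (g := g) z).trans hfg.le)
    simpa using this
  have h3 := (Metric.tendsto_nhds.1 (kac_span N g hg)) (ε / 3) (by positivity)
  filter_upwards [h3] with T hT
  have a1 := hclose (kacLaw N T)
  have a2 := hclose (kacHaar N)
  rw [dist_comm] at a2
  have b1 := dist_triangle (∫ z, f z ∂(kacLaw N T : Measure (UnitAddTorus (Fin N))))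
    (∫ z, g z ∂(kacLaw N T : Measure (UnitAddTorus (Fin N))))
    (∫ z, f z ∂(kacHaar N : Measure (UnitAddTorus (Fin N))))
  have b2 := dist_triangle (∫ z, g z ∂(kacLaw N T : Measure (UnitAddTorus (Fin N))))
    (∫ z, g z ∂(kacHaar N : Measure (UnitAddTorus (Fin N))))
    (∫ z, f z ∂(kacHaar N : Measure (UnitAddTorus (Fin N))))
  linarith

/-- The normalised sum of cosines on the torus. -/
noncomputable def kacS (N : ℕ) (z : UnitAddTorus (Fin N)) : ℝ :=
  (√(N : ℝ))⁻¹ * ∑ i, √2 * kacCos (z i)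

lemma kacS_continuous (N : ℕ) : Continuous (kacS N) := by
  have hc := kacCos_continuous
  unfold kacS
  fun_prop

lemma kac_frontier (N : ℕ) (x₁ x₂ : ℝ) (hx : x₁ < x₂) :
    (kacHaar N : Measure (UnitAddTorus (Fin N))) (frontier (kacS N ⁻¹' Set.Ioo x₁ x₂)) = 0 := by
  rcases N with _ | n
  · have h : IsClopen (kacS 0 ⁻¹' Set.Ioo x₁ x₂) := by
      rcases Subsingleton.set_cases (p := fun s => IsClopen s) (α := UnitAddTorus (Fin 0))
        isClopen_empty isClopen_univ (kacS 0 ⁻¹' Set.Ioo x₁ x₂) with h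
      exact h
    rw [h.frontier_eq, measure_empty]
  · have hlev : ∀ c : ℝ, (kacHaar (n + 1) : Measure (UnitAddTorus (Fin (n + 1))))
        {z | kacS (n + 1) z = c} = 0 := by
      intro c
      have hn : (0 : ℝ) < √((n + 1 : ℕ) : ℝ) := Real.sqrt_pos.2 (by positivity)
      have h2 : (0 : ℝ) < √2 := by positivity
      have := kac_level n (√((n + 1 : ℕ) : ℝ) * c / √2)
      refine measure_mono_null ?_ this
      intro z hz
      simp only [Set.mem_ofPred_eq, kacS] at hz ⊢
      rw [← hz, ← Finset.mul_sum]
      field_simp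
    have hsub : frontier (kacS (n + 1) ⁻¹' Set.Ioo x₁ x₂) ⊆
        {z | kacS (n + 1) z = x₁} ∪ {z | kacS (n + 1) z = x₂} := by
      refine ((kacS_continuous (n + 1)).frontier_preimage_subset _).trans ?_
      rw [frontier_Ioo hx]
      intro z hz
      simpa using hz
    exact measure_mono_null hsub (measure_union_null (hlev _) (hlev _))

lemma kac_inner (N : ℕ) (x₁ x₂ : ℝ) (T : ℝ) (hT : 0 < T) :
    (volume {u : ℝ | u ∈ Set.Icc T (2 * T) ∧
      x₁ / √2 < (∑ n ∈ Finset.range N, Real.cos (u * Real.log (Nat.nth Nat.Prime n))) / √(N : ℝ) ∧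
      (∑ n ∈ Finset.range N, Real.cos (u * Real.log (Nat.nth Nat.Prime n))) / √(N : ℝ) < x₂ / √2}).toReal / T
    = ((kacLaw N T : Measure (UnitAddTorus (Fin N))) (kacS N ⁻¹' Set.Ioo x₁ x₂)).toReal := by
  have hm : Measurable (fun s => kacFlow N (T * (1 + s))) :=
    ((kacFlow_continuous N).comp (by fun_prop)).measurable
  have hE : MeasurableSet (kacS N ⁻¹' Set.Ioo x₁ x₂) :=
    (kacS_continuous N).measurable measurableSet_Ioo
  have e0 : (kacLaw N T : Measure (UnitAddTorus (Fin N)))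
        = kacUnif.map (fun s => kacFlow N (T * (1 + s))) := rfl
  rw [e0, Measure.map_apply hm hE, kacUnif, Measure.restrict_apply (hm hE)]
  have h2 : (0 : ℝ) < √2 := by positivity
  set A := {u : ℝ | u ∈ Set.Icc T (2 * T) ∧
      x₁ / √2 < (∑ n ∈ Finset.range N, Real.cos (u * Real.log (Nat.nth Nat.Prime n))) / √(N : ℝ) ∧
      (∑ n ∈ Finset.range N, Real.cos (u * Real.log (Nat.nth Nat.Prime n))) / √(N : ℝ) < x₂ / √2}
    with hA
  have e1 : (fun s => kacFlow N (T * (1 + s))) ⁻¹' (kacS N ⁻¹' Set.Ioo x₁ x₂) ∩ Set.Icc 0 1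
      = (fun s => 1 + s) ⁻¹' ((fun s => T * s) ⁻¹' A) := by
    ext s
    simp only [Set.mem_inter_iff, Set.mem_preimage, hA, Set.mem_ofPred_eq, kacS, ← Finset.mul_sum,
      kacFlow_cos, Set.mem_Icc, Set.mem_Ioo, div_lt_iff₀ h2, lt_div_iff₀ h2]
    have i1 : (T ≤ T * (1 + s)) ↔ 0 ≤ s := by
      constructor
      · intro h; by_contra hs; push Not at hs; nlinarith
      · intro h; nlinarith
    have i2 : (T * (1 + s) ≤ 2 * T) ↔ s ≤ 1 := by
      constructor
      · intro h; by_contra hs; push Not at hs; nlinarith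
      · intro h; nlinarith
    rw [i1, i2, and_comm]
    have i3 : ∀ b : ℝ, (√(N : ℝ))⁻¹ * (√2 * b) = b / √(N : ℝ) * √2 := fun b => by ring
    rw [i3]
  rw [e1, measure_preimage_add, Real.volume_preimage_mul_left hT.ne', abs_of_pos (by positivity),
    ENNReal.toReal_mul, ENNReal.toReal_ofReal (by positivity)]
  ring

lemma kac_mean : ∫ z : UnitAddCircle, √2 * kacCos z = 0 := by
  rw [← UnitAddCircle.intervalIntegral_preimage 0]
  simp_rw [kacCos_coe]
  rw [intervalIntegral.integral_const_mul,
    intervalIntegral.integral_comp_mul_left (fun x => Real.cos x) (by positivity), integral_cos]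
  simp

lemma kac_var : ∫ z : UnitAddCircle, ((fun z => √2 * kacCos z) ^ 2) z = 1 := by
  rw [← UnitAddCircle.intervalIntegral_preimage 0]
  simp only [Pi.pow_apply, kacCos_coe, mul_pow]
  rw [intervalIntegral.integral_const_mul,
    intervalIntegral.integral_comp_mul_left (fun x => Real.cos x ^ 2) (by positivity),
    integral_cos_sq]
  simp
  field_simp

/-- The law of the normalised sum on the torus. -/
noncomputable def kacRho (N : ℕ) : ProbabilityMeasure ℝ :=
  (kacHaar N).map (kacS_continuous N).measurable.aemeasurable

lemma kacRho_coe (N : ℕ) : (kacRho N : Measure ℝ) =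
    (volume : Measure (Fin N → UnitAddCircle)).map (kacS N) := rfl

lemma kacRho_charFun (N : ℕ) (t : ℝ) : charFun (kacRho N : Measure ℝ) t =
    charFun ((volume : Measure UnitAddCircle).map (fun z => √2 * kacCos z))
      ((√(N : ℝ))⁻¹ * t) ^ N := by
  have hc := kacCos_continuous
  rw [kacRho_coe, charFun_apply_real, charFun_apply_real, integral_map, integral_map]
  · have := integral_fintype_prod_volume_eq_pow (ι := Fin N) (𝕜 := ℂ) (fun z : UnitAddCircle =>
      Complex.exp (((√(N : ℝ))⁻¹ * t : ℝ) * (√2 * kacCos z : ℝ) * Complex.I))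
    rw [Fintype.card_fin] at this
    rw [← this]
    refine integral_congr_ae (Eventually.of_forall fun z => ?_)
    simp only [kacS]
    rw [← Complex.exp_sum]
    congr 1
    push_cast
    rw [Finset.mul_sum, Finset.mul_sum, Finset.sum_mul]
    refine Finset.sum_congr rfl fun i _ => ?_
    ring
  · exact (by fun_prop : Continuous fun z => √2 * kacCos z).measurable.aemeasurable
  · exact (by fun_prop : Continuous fun x : ℝ =>
      Complex.exp (((√(N : ℝ))⁻¹ * t : ℝ) * x * Complex.I)).aestronglyMeasurable
  · exact (kacS_continuous N).measurable.aemeasurable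
  · exact (by fun_prop : Continuous fun x : ℝ =>
      Complex.exp (t * x * Complex.I)).aestronglyMeasurable

lemma kacRho_tendsto : Tendsto kacRho atTop
    (nhds ⟨ProbabilityTheory.gaussianReal 0 1, inferInstance⟩) := by
  refine ProbabilityMeasure.tendsto_iff_tendsto_charFun.2 fun t => ?_
  have hc := kacCos_continuous
  have h := ProbabilityTheory.tendsto_charFun_inv_sqrt_mul_pow
    (P := (volume : Measure UnitAddCircle)) (X := fun z => √2 * kacCos z)
    (by fun_prop : Continuous fun z => √2 * kacCos z).measurable.aemeasurable kac_mean kac_var t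
  simp_rw [kacRho_charFun]
  simpa [ProbabilityTheory.charFun_gaussianReal, neg_div] using h

theorem kac_clt (B : ℕ → ℝ → ℝ)
    (hB : ∀ N u, B N u = ∑ n ∈ Finset.range N, Real.cos (u * Real.log (Nat.nth Nat.Prime n)))
    (x₁ x₂ : ℝ) (hx : x₁ < x₂) :
    ∃ L : ℕ → ℝ,
      (∀ N : ℕ,
        Tendsto (fun T : ℝ =>
          (volume {u : ℝ | u ∈ Set.Icc T (2 * T) ∧
            x₁ / Real.sqrt 2 < B N u / Real.sqrt N ∧
            B N u / Real.sqrt N < x₂ / Real.sqrt 2}).toReal / T)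
          atTop (nhds (L N))) ∧
      Tendsto L atTop
        (nhds ((1 / Real.sqrt (2 * π)) * ∫ x in x₁..x₂, Real.exp (-x ^ 2 / 2))) := by
  refine ⟨fun N => ((kacHaar N : Measure (UnitAddTorus (Fin N)))
    (kacS N ⁻¹' Set.Ioo x₁ x₂)).toReal, fun N => ?_, ?_⟩
  · have h := ProbabilityMeasure.tendsto_measure_of_null_frontier_of_tendsto' (kac_equidist N)
      (kac_frontier N x₁ x₂ hx)
    have h' := (ENNReal.tendsto_toReal (measure_ne_top _ _)).comp h
    refine h'.congr' ?_
    filter_upwards [eventually_gt_atTop 0] with T hT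
    simp_rw [hB]
    exact (kac_inner N x₁ x₂ T hT).symm
  · have hfr : (ProbabilityTheory.gaussianReal 0 1) (frontier (Set.Ioo x₁ x₂)) = 0 := by
      rw [frontier_Ioo hx]
      have := ProbabilityTheory.nullSingletonClass_gaussianReal (μ := 0) (v := 1) one_ne_zero
      exact (Set.toFinite _).measure_zero _
    have h := ProbabilityMeasure.tendsto_measure_of_null_frontier_of_tendsto' kacRho_tendsto hfr
    change Tendsto _ _ (nhds ((ProbabilityTheory.gaussianReal 0 1) (Set.Ioo x₁ x₂))) at h
    have h' := (ENNReal.tendsto_toReal (measure_ne_top _ _)).comp h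
    have hval : ((ProbabilityTheory.gaussianReal 0 1) (Set.Ioo x₁ x₂)).toReal =
        (1 / Real.sqrt (2 * π)) * ∫ x in x₁..x₂, Real.exp (-x ^ 2 / 2) := by
      rw [ProbabilityTheory.gaussianReal_apply_eq_integral _ one_ne_zero, ENNReal.toReal_ofReal
        (integral_nonneg fun x => ProbabilityTheory.gaussianPDFReal_nonneg _ _ _),
        intervalIntegral.integral_of_le hx.le, integral_Ioc_eq_integral_Ioo, ← integral_const_mul]
      refine integral_congr_ae (Eventually.of_forall fun x => ?_)
      simp [ProbabilityTheory.gaussianPDFReal]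
    rw [← hval]
    refine h'.congr fun N => ?_
    simp only [Function.comp]
    rw [kacRho_coe, Measure.map_apply (kacS_continuous N).measurable measurableSet_Ioo]
    rfl
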